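/- Let Σ be a rational fan and f ∈ PL(Σ). Then the class [e^f] equals 1 in the quotient ring PE(Σ)/⟨e^ℓ − 1 : ℓ ∈ L(Σ)⟩ if and only if f ∈ L(Σ), i.e., f is the restriction to |Σ| of an integral linear function m ∈ M. -/

import Mathlib

open scoped BigOperators Pointwise

namespace EhrhartFormalization

/-- The ambient real vector space `N_ℝ ≅ ℝⁿ`, with lattice `N = ℤⁿ`. -/
abbrev V (n : ℕ) : Type := Fin n → ℝ

/-- The real point associated to a lattice point. -/
def toR {n : ℕ} (u : Fin n → ℤ) : V n := fun i => (u i : ℝ)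

/-- The pairing of an integral linear functional `m ∈ M` with a point of `N_ℝ`. -/
def pairR {n : ℕ} (m : Fin n → ℤ) (v : V n) : ℝ := ∑ i, (m i : ℝ) * v i

/-- The pairing of an integral linear functional with a lattice point. -/
def pairZ {n : ℕ} (m u : Fin n → ℤ) : ℤ := ∑ i, m i * u i

/-- A rational cone: a finite intersection of closed rational halfspaces. -/
def IsRationalCone {n : ℕ} (σ : Set (V n)) : Prop :=
  ∃ s : Finset (Fin n → ℤ), σ = {v | ∀ m ∈ s, 0 ≤ pairR m v}

/-- `τ` is a face of `σ`: it is cut out by an integral linear functional that is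
nonpositive on `σ`. -/
def IsFaceOf {n : ℕ} (τ σ : Set (V n)) : Prop :=
  ∃ m : Fin n → ℤ, (∀ v ∈ σ, pairR m v ≤ 0) ∧ τ = {v ∈ σ | pairR m v = 0}

/-- A rational fan in `N_ℝ`. -/
structure RationalFan (n : ℕ) where
  cones : Set (Set (V n))
  finite : cones.Finite
  rational : ∀ σ ∈ cones, IsRationalCone σ
  face_mem : ∀ σ ∈ cones, ∀ τ : Set (V n), IsFaceOf τ σ → τ ∈ cones
  inter_face : ∀ σ₁ ∈ cones, ∀ σ₂ ∈ cones, IsFaceOf (σ₁ ∩ σ₂) σ₁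

/-- The support of a fan: the union of its cones. -/
def RationalFan.support {n : ℕ} (S : RationalFan n) : Set (V n) := ⋃ σ ∈ S.cones, σ

/-- The dimension of a cone. -/
noncomputable def dimCone {n : ℕ} (σ : Set (V n)) : ℕ :=
  Module.finrank ℝ (Submodule.span ℝ σ)

/-- The set `Σ(k)` of `k`-dimensional cones of a fan. -/
def RationalFan.conesDim {n : ℕ} (S : RationalFan n) (k : ℕ) : Set (Set (V n)) :=
  {σ | σ ∈ S.cones ∧ dimCone σ = k}

/-- The rays (`1`-dimensional cones) of a fan. -/
def RationalFan.rays {n : ℕ} (S : RationalFan n) : Set (Set (V n)) :=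
  S.conesDim 1

/-- The dimension of a fan: the largest dimension of any of its cones. -/
noncomputable def RationalFan.dim {n : ℕ} (S : RationalFan n) : ℕ :=
  sSup (dimCone '' S.cones)

/-- `u` is the primitive ray generator of the ray `ρ`: the lattice point of `ρ`
generating `ρ ∩ N` as a monoid. -/
def IsRayGenOf {n : ℕ} (ρ : Set (V n)) (u : Fin n → ℤ) : Prop :=
  toR u ∈ ρ ∧ u ≠ 0 ∧ ∀ w : Fin n → ℤ, toR w ∈ ρ → ∃ c : ℕ, w = c • u

open Classical in
/-- The primitive generator of a ray (junk value `0` if none exists). -/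
noncomputable def rayGen {n : ℕ} (ρ : Set (V n)) : Fin n → ℤ :=
  if h : ∃ u, IsRayGenOf ρ u then h.choose else 0

/-- A unimodular cone: generated by part of a `ℤ`-basis of the lattice. -/
def IsUnimodularCone {n : ℕ} (σ : Set (V n)) : Prop :=
  ∃ (b : Module.Basis (Fin n) ℤ (Fin n → ℤ)) (k : ℕ), k ≤ n ∧
    σ = {v | ∃ c : Fin n → ℝ, (∀ i, 0 ≤ c i) ∧ (∀ i : Fin n, k ≤ (i : ℕ) → c i = 0) ∧
          v = ∑ i, c i • toR (b i)}

/-- A unimodular fan: a pointed fan all of whose cones are unimodular. -/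
def IsUnimodular {n : ℕ} (S : RationalFan n) : Prop :=
  ({0} : Set (V n)) ∈ S.cones ∧ ∀ σ ∈ S.cones, IsUnimodularCone σ

/-- A complete fan: its support is all of `N_ℝ`. -/
def IsComplete {n : ℕ} (S : RationalFan n) : Prop := S.support = Set.univ

/-- For a unimodular fan, `PL(Σ) = ℤ^{Σ(1)}`; this is the element of `PL(Σ)`
obtained by restricting an integral linear function `m ∈ M`, recorded by its
values at the primitive ray generators. -/
noncomputable def linPL {n : ℕ} (S : RationalFan n) (m : Fin n → ℤ) : ↥S.rays → ℤ :=
  fun ρ => pairZ m (rayGen (ρ : Set (V n)))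

open Classical in
/-- The Courant function of a ray: value `1` at `u_ρ₀` and `0` at other ray generators. -/
noncomputable def courant {n : ℕ} (S : RationalFan n) (ρ₀ : ↥S.rays) : ↥S.rays → ℤ :=
  fun ρ => if ρ = ρ₀ then 1 else 0

/-- The neighborhood `Σ^{(σ)}` of a cone: all cones contained in a cone containing `σ`. -/
def RationalFan.nbhd {n : ℕ} (S : RationalFan n) (σ : Set (V n)) : Set (Set (V n)) :=
  {τ | τ ∈ S.cones ∧ ∃ σ' ∈ S.cones, σ ⊆ σ' ∧ τ ⊆ σ'}

/-- `T` is the star fan of `S` at the cone `σ`, realized via the lattice-compatible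
surjection `π` whose kernel is the span of `σ`. -/
def IsStarMap {n m : ℕ} (S : RationalFan n) (σ : Set (V n)) (π : V n →ₗ[ℝ] V m)
    (T : RationalFan m) : Prop :=
  Function.Surjective π ∧
  (∀ u : Fin n → ℤ, ∃ w : Fin m → ℤ, π (toR u) = toR w) ∧
  (∀ w : Fin m → ℤ, ∃ u : Fin n → ℤ, π (toR u) = toR w) ∧
  LinearMap.ker π = Submodule.span ℝ σ ∧
  T.cones = (Set.image π) '' S.nbhd σ

/-- The recursive system of conditions defining Ehrhart fans: `χ` descends to
`uPL(Σ) = PL(Σ)/L(Σ)`, is normalized by `χ(0) = 1`, and for every ray `ρ` there is a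
star fan (with its own Ehrhart function `χT`, recursively) along which the Ehrhart
recursion `χ([f]) = χ([f - δ_ρ]) + χ_{Σ^ρ}([f]^ρ)` holds, where `[f]^ρ` is computed
by subtracting an integral linear function `m₀` agreeing with `f` on `ρ` and pushing
down to the star fan. -/
def EhrhartRec : (n : ℕ) → (S : RationalFan n) → ((↥S.rays → ℤ) → ℤ) → Prop
  | 0, S, χ =>
      (∀ (f : ↥S.rays → ℤ) (m : Fin 0 → ℤ), χ (f + linPL S m) = χ f) ∧ χ 0 = 1
  | (n + 1), S, χ =>
      (∀ (f : ↥S.rays → ℤ) (m : Fin (n + 1) → ℤ), χ (f + linPL S m) = χ f) ∧ χ 0 = 1 ∧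
      ∀ ρ : ↥S.rays, ∃ (π : V (n + 1) →ₗ[ℝ] V n) (T : RationalFan n)
          (χT : (↥T.rays → ℤ) → ℤ),
        IsStarMap S (ρ : Set (V (n + 1))) π T ∧ IsUnimodular T ∧ EhrhartRec n T χT ∧
        ∀ f : ↥S.rays → ℤ, ∃ (m₀ : Fin (n + 1) → ℤ) (g : ↥T.rays → ℤ),
          pairZ m₀ (rayGen (ρ : Set (V (n + 1)))) = f ρ ∧
          (∀ (ρ' : ↥S.rays) (ρT : ↥T.rays),
              π '' (ρ' : Set (V (n + 1))) = (ρT : Set (V n)) →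
              g ρT = f ρ' - pairZ m₀ (rayGen (ρ' : Set (V (n + 1))))) ∧
          χ f = χ (f - courant S ρ) + χT g

/-- A unimodular fan is Ehrhart if it admits an Ehrhart function satisfying the
Ehrhart recursion (together, recursively, with all of its star fans). -/
def IsEhrhart {n : ℕ} (S : RationalFan n) : Prop :=
  IsUnimodular S ∧ ∃ χ : (↥S.rays → ℤ) → ℤ, EhrhartRec n S χ

/-- An integral piecewise-linear function on a fan (recorded as a function on all of
`N_ℝ`, constrained on each cone of the fan). -/
def IsPLFun {n : ℕ} (S : RationalFan n) (φ : V n → ℝ) : Prop :=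
  ∀ σ ∈ S.cones, ∃ m : Fin n → ℤ, ∀ v ∈ σ, φ v = pairR m v
/-- An integral piecewise-linear function on `Σ`, viewed as a function on the
support `|Σ|`. -/
def IsPLSub {n : ℕ} (S : RationalFan n) (f : ↥S.support → ℝ) : Prop :=
  ∀ σ ∈ S.cones, ∃ m : Fin n → ℤ,
    ∀ v : ↥S.support, (v : V n) ∈ σ → f v = pairR m (v : V n)

/-- An integral linear function on `|Σ|`: the restriction of some `m ∈ M`. -/
def IsLinSub {n : ℕ} (S : RationalFan n) (f : ↥S.support → ℝ) : Prop :=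
  ∃ m : Fin n → ℤ, ∀ v : ↥S.support, f v = pairR m (v : V n)

/-- The ring `PE(Σ)` of integral piecewise-exponential functions on `Σ`: the subring of
`Fun(|Σ|, ℝ)` generated by the functions `e^f` for `f ∈ PL(Σ)`. -/
def PEring {n : ℕ} (S : RationalFan n) : Subring (↥S.support → ℝ) :=
  Subring.closure {F | ∃ f : ↥S.support → ℝ, IsPLSub S f ∧ F = fun v => Real.exp (f v)}

/-- The ideal `⟨e^ℓ - 1 : ℓ ∈ L(Σ)⟩` of `PE(Σ)`. -/
def linIdeal {n : ℕ} (S : RationalFan n) : Ideal ↥(PEring S) :=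
  Ideal.span {x | ∃ l : ↥S.support → ℝ, IsLinSub S l ∧
    (x : ↥S.support → ℝ) = (fun v => Real.exp (l v)) - 1}

/-!
Restrict functions to the rays `t ↦ t • v`, `t ≥ 0`. If `f` is positively homogeneous, then `e^f`
has value `1` and right derivative `f v` at `t = 0`. Hence every polynomial with integer
coefficients in such exponentials takes one and the same integer value `k` at the start of all rays,
and by the Leibniz rule its product with `e^ℓ - 1` has value `0` and derivative `k ℓ`. So radial
differentiation maps the ideal `⟨e^ℓ - 1 : ℓ ∈ L⟩` into the group `L`, while it maps `e^f - 1`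
to `f`.
-/

section RadialJet

open scoped NNReal

variable {X : Type*} [SMul ℝ≥0 X]

/-- Positive homogeneity of degree one of a real function on a space with dilations. -/
def PosHomogeneous (f : X → ℝ) : Prop := ∀ (t : ℝ≥0) (v : X), f (t • v) = t * f v

/-- The radial 1-jet of `F` at the apex: along each ray `t ↦ t • v` the function `F` starts at the
value `a`, the same for all rays, with right derivative `d v`. The ray is parametrized by the whole
of `ℝ` through `Real.toNNReal`, but only its part over `t ≥ 0` matters. -/
def HasRadialJet (F : X → ℝ) (a : ℝ) (d : X → ℝ) : Prop :=
  ∀ v, F ((0 : ℝ≥0) • v) = a ∧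
    HasDerivWithinAt (fun t : ℝ => F (t.toNNReal • v)) (d v) (Set.Ici 0) 0

namespace HasRadialJet

variable {F G d e : X → ℝ} {a b : ℝ}

theorem derivative_unique (hF : HasRadialJet F a d) (hF' : HasRadialJet F b e) : d = e :=
  funext fun v => (uniqueDiffOn_Ici (0 : ℝ) 0 Set.self_mem_Ici).eq_deriv _ (hF v).2 (hF' v).2

theorem const (a : ℝ) : HasRadialJet (fun _ : X => a) a 0 :=
  fun _ => ⟨rfl, hasDerivWithinAt_const _ _ _⟩

theorem neg (hF : HasRadialJet F a d) : HasRadialJet (-F) (-a) (-d) :=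
  fun v => ⟨congrArg Neg.neg (hF v).1, (hF v).2.neg⟩

theorem add (hF : HasRadialJet F a d) (hG : HasRadialJet G b e) :
    HasRadialJet (F + G) (a + b) (d + e) :=
  fun v => ⟨congrArg₂ (· + ·) (hF v).1 (hG v).1, (hF v).2.add (hG v).2⟩

theorem mul (hF : HasRadialJet F a d) (hG : HasRadialJet G b e) :
    HasRadialJet (F * G) (a * b) (b • d + a • e) := by
  refine fun v => ⟨congrArg₂ (· * ·) (hF v).1 (hG v).1, ?_⟩
  refine ((hF v).2.mul (hG v).2).congr_deriv ?_
  simp [(hF v).1, (hG v).1, mul_comm]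

end HasRadialJet

theorem PosHomogeneous.hasRadialJet_exp {f : X → ℝ} (hf : PosHomogeneous f) :
    HasRadialJet (fun v => Real.exp (f v)) 1 f := by
  refine fun v => ⟨by simp [hf 0 v], ?_⟩
  have h_exp : HasDerivAt (fun t : ℝ => Real.exp (t * f v)) (f v) 0 := by
    simpa using ((hasDerivAt_id (0 : ℝ)).mul_const (f v)).exp
  refine h_exp.hasDerivWithinAt.congr_of_mem (fun t ht => ?_) Set.self_mem_Ici
  simp only [hf t.toNNReal v, Real.coe_toNNReal t ht]

theorem PosHomogeneous.hasRadialJet_exp_sub_one {f : X → ℝ} (hf : PosHomogeneous f) :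
    HasRadialJet ((fun v => Real.exp (f v)) - 1) 0 f := by
  simpa [sub_eq_add_neg, Pi.one_def] using hf.hasRadialJet_exp.add (HasRadialJet.const 1).neg

end RadialJet

section ExpSubring

variable {X : Type*}

/-- The ring generated by the exponentials of the functions in `H`; it is `PE(Σ)` when
`H = PL(Σ)`. -/
def expSubring (H : Set (X → ℝ)) : Subring (X → ℝ) :=
  Subring.closure {F | ∃ f ∈ H, F = fun v => Real.exp (f v)}

/-- The ideal `⟨e^ℓ - 1 : ℓ ∈ L⟩` of `expSubring H`, meant for `L ⊆ H`. -/
def expIdeal (H L : Set (X → ℝ)) : Ideal (expSubring H) :=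
  Ideal.span {x | ∃ l ∈ L, (x : X → ℝ) = (fun v => Real.exp (l v)) - 1}

open scoped NNReal

variable [SMul ℝ≥0 X] {H : Set (X → ℝ)}

theorem exists_hasRadialJet_intCast_of_mem_expSubring (hH : ∀ f ∈ H, PosHomogeneous f)
    {F : X → ℝ} (hF : F ∈ expSubring H) : ∃ (k : ℤ) (d : X → ℝ), HasRadialJet F k d := by
  induction hF using Subring.closure_induction with
  | mem F hF =>
    obtain ⟨f, hf, rfl⟩ := hF
    exact ⟨1, f, by simpa using (hH f hf).hasRadialJet_exp⟩
  | zero => exact ⟨0, 0, by exact_mod_cast HasRadialJet.const 0⟩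
  | one => exact ⟨1, 0, by exact_mod_cast HasRadialJet.const 1⟩
  | add F G _ _ hF hG =>
    obtain ⟨k, d, hF⟩ := hF
    obtain ⟨l, e, hG⟩ := hG
    exact ⟨k + l, d + e, by simpa using hF.add hG⟩
  | neg F _ hF =>
    obtain ⟨k, d, hF⟩ := hF
    exact ⟨-k, -d, by simpa using hF.neg⟩
  | mul F G _ _ hF hG =>
    obtain ⟨k, d, hF⟩ := hF
    obtain ⟨l, e, hG⟩ := hG
    exact ⟨k * l, _, by simpa using hF.mul hG⟩

theorem exists_mem_hasRadialJet_zero_of_mem_expIdeal (hH : ∀ f ∈ H, PosHomogeneous f)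
    {L : AddSubgroup (X → ℝ)} (hLH : (L : Set (X → ℝ)) ⊆ H)
    {x : expSubring H} (hx : x ∈ expIdeal H L) : ∃ l ∈ L, HasRadialJet (x : X → ℝ) 0 l := by
  induction hx using Submodule.span_induction with
  | mem x hx =>
    obtain ⟨l, hl, hx⟩ := hx
    exact ⟨l, hl, hx ▸ (hH l (hLH hl)).hasRadialJet_exp_sub_one⟩
  | zero => exact ⟨0, L.zero_mem, HasRadialJet.const 0⟩
  | add x y _ _ hx hy =>
    obtain ⟨l, hl, hx⟩ := hx
    obtain ⟨m, hm, hy⟩ := hy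
    exact ⟨l + m, L.add_mem hl hm, by simpa using hx.add hy⟩
  | smul p x _ hx =>
    obtain ⟨l, hl, hx⟩ := hx
    obtain ⟨k, d, hp⟩ := exists_hasRadialJet_intCast_of_mem_expSubring hH p.2
    exact ⟨k • l, L.zsmul_mem hl k, by simpa [Int.cast_smul_eq_zsmul] using hp.mul hx⟩

theorem exp_class_eq_one_iff_linear_general (hH : ∀ f ∈ H, PosHomogeneous f)
    {L : AddSubgroup (X → ℝ)} (hLH : (L : Set (X → ℝ)) ⊆ H) {f : X → ℝ} (hf : f ∈ H) :
    Ideal.Quotient.mk (expIdeal H L)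
        (⟨fun v => Real.exp (f v), Subring.subset_closure ⟨f, hf, rfl⟩⟩ : expSubring H)
      = 1 ↔ f ∈ L := by
  rw [← map_one (Ideal.Quotient.mk (expIdeal H L)), Ideal.Quotient.eq]
  refine ⟨fun h => ?_, fun hfL => Ideal.subset_span ⟨f, hfL, rfl⟩⟩
  obtain ⟨l, hl, h_jet⟩ := exists_mem_hasRadialJet_zero_of_mem_expIdeal hH hLH h
  rwa [(hH f hf).hasRadialJet_exp_sub_one.derivative_unique h_jet]

end ExpSubring

section Fan

open scoped NNReal

variable {n : ℕ}

theorem pairR_smul (m : Fin n → ℤ) (t : ℝ) (v : V n) : pairR m (t • v) = t * pairR m v :=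
  dotProduct_smul t (fun i => (m i : ℝ)) v

theorem IsRationalCone.smul_mem {σ : Set (V n)} (hσ : IsRationalCone σ) (t : ℝ≥0) {v : V n}
    (hv : v ∈ σ) : t • v ∈ σ := by
  obtain ⟨s, rfl⟩ := hσ
  intro m hm
  rw [NNReal.smul_def, pairR_smul]
  exact mul_nonneg t.2 (hv m hm)

theorem RationalFan.mem_support {S : RationalFan n} {v : V n} :
    v ∈ S.support ↔ ∃ σ ∈ S.cones, v ∈ σ := by
  simp [RationalFan.support]

theorem RationalFan.smul_mem_support (S : RationalFan n) (t : ℝ≥0) {v : V n}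
    (hv : v ∈ S.support) : t • v ∈ S.support := by
  obtain ⟨σ, hσ, hvσ⟩ := mem_support.mp hv
  exact mem_support.mpr ⟨σ, hσ, (S.rational σ hσ).smul_mem t hvσ⟩

instance RationalFan.instSMulSupport (S : RationalFan n) : SMul ℝ≥0 S.support :=
  ⟨fun t v => ⟨t • (v : V n), S.smul_mem_support t v.2⟩⟩

variable {S : RationalFan n} {f : S.support → ℝ}

theorem IsPLSub.posHomogeneous (hf : IsPLSub S f) : PosHomogeneous f := by
  intro t v
  obtain ⟨σ, hσ, hvσ⟩ := RationalFan.mem_support.mp v.2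
  obtain ⟨m, hm⟩ := hf σ hσ
  rw [hm v hvσ, hm (t • v) ((S.rational σ hσ).smul_mem t hvσ)]
  exact pairR_smul m t v

theorem IsLinSub.isPLSub (hf : IsLinSub S f) : IsPLSub S f :=
  fun _ _ => hf.imp fun _ hm v _ => hm v

/-- The group `L(Σ)` of integral linear functions on `|Σ|`. -/
def linSubgroup (S : RationalFan n) : AddSubgroup (S.support → ℝ) where
  carrier := {l | IsLinSub S l}
  zero_mem' := ⟨0, fun v => by simp [pairR]⟩
  add_mem' := by
    rintro _ _ ⟨m, hm⟩ ⟨m', hm'⟩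
    exact ⟨m + m', fun v => by simp [hm, hm', pairR, add_mul, Finset.sum_add_distrib]⟩
  neg_mem' := by
    rintro _ ⟨m, hm⟩
    exact ⟨-m, fun v => by simp [hm, pairR]⟩

end Fan

/-- For `f ∈ PL(Σ)`, the class `[e^f]` equals `1` in
`uPE(Σ) = PE(Σ)/⟨e^ℓ - 1 : ℓ ∈ L(Σ)⟩` if and only if `f ∈ L(Σ)`. -/
theorem exp_class_eq_one_iff_linear {n : ℕ} (S : RationalFan n)
    (f : ↥S.support → ℝ) (hf : IsPLSub S f) :
    Ideal.Quotient.mk (linIdeal S)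
        (⟨fun v => Real.exp (f v), Subring.subset_closure ⟨f, hf, rfl⟩⟩ : ↥(PEring S))
      = 1 ↔ IsLinSub S f :=
  exp_class_eq_one_iff_linear_general (H := {f | IsPLSub S f}) (L := linSubgroup S)
    (fun _ => IsPLSub.posHomogeneous) (fun _ => IsLinSub.isPLSub) hf

end EhrhartFormalization
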